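/- Checkers head normal forms are typable with zero weight: for every checkers term h in →hch-normal form (equivalently, of the shape λ_{c₁}x₁…λ_{cₙ}xₙ. y ·_{d₁} t₁ … ·_{dₘ} tₘ), there exist an environment Γ and a linear type L such that Γ ⊢₀ h : L is derivable. -/

import Mathlib

/-!
A head normal form that is not an abstraction is a variable applied to arguments. Such a neutral
term can be given any linear type `L` at no cost: its head variable gets the type
`[] →_{d₁} … [] →_{dₘ} L`, whose colors copy those of the applications, so that no application is
charged and every argument is typed with the empty multi type. The abstractions in front of a
neutral term are then typed for free.
-/


set_option autoImplicit false

abbrev Var := ℕ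

/-- Colors: white (○) and black (●). -/
inductive Color where
  | white
  | black
deriving DecidableEq

/-- The opposite color. -/
def Color.flip : Color → Color
  | .white => .black
  | .black => .white

/-- Checkers terms (considered modulo α-conversion). -/
inductive Tm where
  | var : Var → Tm
  | lam : Color → Var → Tm → Tm
  | app : Color → Tm → Tm → Tm

/-- Substitution t{u/x} (capture avoided by the modulo-α convention). -/
def Tm.subst (x : Var) (u : Tm) : Tm → Tm
  | .var y => if y = x then u else .var y
  | .lam c y t => if y = x then .lam c y t else .lam c y (Tm.subst x u t)
  | .app c t s => .app c (Tm.subst x u t) (Tm.subst x u s)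

/-- Silent root step: (λ_c x. t) ·_c u ↦τ t{u/x}. -/
inductive RootSilent : Tm → Tm → Prop where
  | mk (c : Color) (x : Var) (t u : Tm) :
      RootSilent (.app c (.lam c x t) u) (Tm.subst x u t)

/-- Interaction root step: (λ_c x. t) ·_{c⊥} u ↦ι t{u/x}. -/
inductive RootInter : Tm → Tm → Prop where
  | mk (c : Color) (x : Var) (t u : Tm) :
      RootInter (.app c.flip (.lam c x t) u) (Tm.subst x u t)

/-- Closure of a relation under applicative contexts ⟨·⟩ ·_{d₁} t₁ ⋯ ·_{dₘ} tₘ. -/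
inductive AppClos (R : Tm → Tm → Prop) : Tm → Tm → Prop where
  | root {t u : Tm} : R t u → AppClos R t u
  | app {t u : Tm} (c : Color) (s : Tm) : AppClos R t u → AppClos R (.app c t s) (.app c u s)

/-- Closure of a relation under head contexts λ_{c₁}x₁…λ_{cₙ}xₙ.⟨·⟩ ·_{d₁} t₁ ⋯ ·_{dₘ} tₘ. -/
inductive HeadClos (R : Tm → Tm → Prop) : Tm → Tm → Prop where
  | base {t u : Tm} : AppClos R t u → HeadClos R t u
  | lam {t u : Tm} (c : Color) (x : Var) : HeadClos R t u → HeadClos R (.lam c x t) (.lam c x u)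

/-- Silent head step →hτ. -/
def HStepSilent : Tm → Tm → Prop := HeadClos RootSilent
/-- Interaction head step →hι. -/
def HStepInter : Tm → Tm → Prop := HeadClos RootInter
/-- Checkers head step →hch = →hτ ∪ →hι. -/
def HStep (t u : Tm) : Prop := HStepSilent t u ∨ HStepInter t u

/-- t ⇓ι^k : the head-reduction sequence from t reaches a →hch-normal form
and contains exactly k interaction steps. -/
inductive Evals : Tm → ℕ → Prop where
  | nf {t : Tm} : (∀ u, ¬ HStep t u) → Evals t 0
  | silent {t u : Tm} {k : ℕ} : HStepSilent t u → Evals u k → Evals t k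
  | inter {t u : Tm} {k : ℕ} : HStepInter t u → Evals u k → Evals t (k + 1)

/-- Linear types: atoms and colored arrows M →_c L (multi types as lists). -/
inductive LinTy where
  | atom : ℕ → LinTy
  | arr : List LinTy → Color → LinTy → LinTy

/-- Multi types: finite multisets [L₁,…,Lₙ] of linear types (represented as lists). -/
abbrev MTy := List LinTy

/-- Either a linear type or a multi type. -/
inductive GTy where
  | lin : LinTy → GTy
  | multi : MTy → GTy

/-- Type environments. -/
abbrev Env := Var → MTy

/-- Pointwise (multiset) union Γ ⊎ Δ of environments. -/
def Env.union (Γ Δ : Env) : Env := fun x => Γ x ++ Δ x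
/-- The empty environment. -/
def Env.empty : Env := fun _ => []
/-- The environment x : M. -/
def Env.single (x : Var) (M : MTy) : Env := fun y => if y = x then M else []
/-- Environment update: (Γ, x:M) when Γ x is empty. -/
def Env.update (Γ : Env) (x : Var) (M : MTy) : Env := fun y => if y = x then M else Γ y

/-- Dual Kronecker delta δ̄(c,d): 0 if the colors agree, 1 otherwise. -/
def costOf (c d : Color) : ℕ := if c = d then 0 else 1

/-- Typing judgments Γ ⊢ₖ t : T of the checkers multi type system,
additionally indexed by the applicative size (number of @ rules) of the derivation. -/
inductive Ty : Env → ℕ → Tm → GTy → ℕ → Prop where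
  | ax (x : Var) (L : LinTy) :
      Ty (Env.single x [L]) 0 (.var x) (.lin L) 0
  | many_nil (t : Tm) :
      Ty Env.empty 0 t (.multi []) 0
  | many_cons {Γ Δ : Env} {k k' : ℕ} {t : Tm} {L : LinTy} {M : MTy} {s s' : ℕ} :
      Ty Γ k t (.lin L) s → Ty Δ k' t (.multi M) s' →
      Ty (Env.union Γ Δ) (k + k') t (.multi (L :: M)) (s + s')
  | lam {Γ : Env} {k : ℕ} {t : Tm} {L : LinTy} {s : ℕ} (c : Color) (x : Var) :
      Ty Γ k t (.lin L) s →
      Ty (Env.update Γ x []) k (.lam c x t) (.lin (.arr (Γ x) c L)) s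
  | app {Γ Δ : Env} {k₁ k₂ : ℕ} {t u : Tm} {M : MTy} {c : Color} {L : LinTy} {s₁ s₂ : ℕ}
      (d : Color) :
      Ty Γ k₁ t (.lin (.arr M c L)) s₁ → Ty Δ k₂ u (.multi M) s₂ →
      Ty (Env.union Γ Δ) (k₁ + k₂ + costOf c d) (.app d t u) (.lin L) (s₁ + s₂ + 1)

/-- Γ ⊢ₖ t : T is derivable (for some derivation/size). -/
def HasTy (Γ : Env) (k : ℕ) (t : Tm) (T : GTy) : Prop := ∃ s, Ty Γ k t T s

/-- Polarities. -/
inductive Pol where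
  | pos
  | neg
deriving DecidableEq

/-- The opposite polarity. -/
def Pol.flip : Pol → Pol
  | .pos => .neg
  | .neg => .pos

mutual
  /-- Polarized whitening on linear types: `WhiterL p k L' L` means L' ⊑^p_k L. -/
  inductive WhiterL : Pol → ℕ → LinTy → LinTy → Prop where
    | atom (p : Pol) (a : ℕ) : WhiterL p 0 (.atom a) (.atom a)
    | whiten {k₁ k₂ : ℕ} {M' M : List LinTy} {L' L : LinTy} :
        WhiterM .neg k₁ M' M → WhiterL .pos k₂ L' L →
        WhiterL .pos (k₁ + k₂ + 1) (.arr M' .white L') (.arr M .black L)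
    | congr {p : Pol} {k₁ k₂ : ℕ} {M' M : List LinTy} {L' L : LinTy} (c : Color) :
        WhiterM p.flip k₁ M' M → WhiterL p k₂ L' L →
        WhiterL p (k₁ + k₂) (.arr M' c L') (.arr M c L)

  /-- Polarized whitening on multi types (componentwise, summing the costs). -/
  inductive WhiterM : Pol → ℕ → List LinTy → List LinTy → Prop where
    | nil (p : Pol) : WhiterM p 0 [] []
    | cons {p : Pol} {k k' : ℕ} {L' L : LinTy} {M' M : List LinTy} :
        WhiterL p k L' L → WhiterM p k' M' M →
        WhiterM p (k + k') (L' :: M') (L :: M)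
end

/-- Polarized whitening on environments (pointwise, with finitely many nonzero costs). -/
def WhiterE (p : Pol) (k : ℕ) (Γ' Γ : Env) : Prop :=
  ∃ f : Var →₀ ℕ, (∀ x, WhiterM p (f x) (Γ' x) (Γ x)) ∧ k = f.sum fun _ n => n

/-- Polarized whitening on pairs: (Γ',L') ⊑^p_k (Γ,L) iff Γ' ⊑^{p°}_{k₁} Γ and L' ⊑^p_{k₂} L
with k = k₁ + k₂. -/
def WhiterP (p : Pol) (k : ℕ) (Γ' : Env) (L' : LinTy) (Γ : Env) (L : LinTy) : Prop :=
  ∃ k₁ k₂, k = k₁ + k₂ ∧ WhiterE p.flip k₁ Γ' Γ ∧ WhiterL p k₂ L' L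

/-- Ordinary λ-terms. -/
inductive LTm where
  | var : Var → LTm
  | lam : Var → LTm → LTm
  | app : LTm → LTm → LTm

/-- Substitution on λ-terms. -/
def LTm.subst (x : Var) (u : LTm) : LTm → LTm
  | .var y => if y = x then u else .var y
  | .lam y t => if y = x then .lam y t else .lam y (LTm.subst x u t)
  | .app t s => .app (LTm.subst x u t) (LTm.subst x u s)

/-- Root β-step. -/
inductive LRoot : LTm → LTm → Prop where
  | mk (x : Var) (t u : LTm) : LRoot (.app (.lam x t) u) (LTm.subst x u t)

inductive LAppClos (R : LTm → LTm → Prop) : LTm → LTm → Prop where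
  | root {t u : LTm} : R t u → LAppClos R t u
  | app {t u : LTm} (s : LTm) : LAppClos R t u → LAppClos R (.app t s) (.app u s)

inductive LHeadClos (R : LTm → LTm → Prop) : LTm → LTm → Prop where
  | base {t u : LTm} : LAppClos R t u → LHeadClos R t u
  | lam {t u : LTm} (x : Var) : LHeadClos R t u → LHeadClos R (.lam x t) (.lam x u)

/-- Head β-reduction step on λ-terms. -/
def LHStep : LTm → LTm → Prop := LHeadClos LRoot
/-- Head normal forms. -/
def LIsHnf (t : LTm) : Prop := ∀ u, ¬ LHStep t u
/-- Many-step head reduction. -/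
def HeadReduces (t h : LTm) : Prop := Relation.ReflTransGen LHStep t h
/-- t has a head normal form. -/
def HasHnf (t : LTm) : Prop := ∃ h, HeadReduces t h ∧ LIsHnf h

/-- λx₁…xₙ.t -/
def lams : List Var → LTm → LTm
  | [], t => t
  | x :: xs, t => .lam x (lams xs t)

/-- t u₁ ⋯ uₖ -/
def apps : LTm → List LTm → LTm
  | t, [] => t
  | t, u :: us => apps (.app t u) us

/-- x occurs free in t. -/
def LFree (x : Var) : LTm → Prop
  | .var y => y = x
  | .lam y t => y ≠ x ∧ LFree x t
  | .app t u => LFree x t ∨ LFree x u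

/-- The (Hη_red) clause: t head-reduces to λx₁…x_{n+p}. y t₁…t_{k+p},
u head-reduces to λx₁…xₙ. y u₁…u_k, with R tᵢ uᵢ (i ≤ k), R t_{k+i} x_{n+i},
and the extra abstracted variables fresh for y u₁…u_k. -/
def HEtaL (R : LTm → LTm → Prop) (t u : LTm) : Prop :=
  ∃ (xs zs : List Var) (y : Var) (ts ts' us : List LTm),
    HeadReduces t (lams (xs ++ zs) (apps (.var y) (ts ++ ts'))) ∧
    HeadReduces u (lams xs (apps (.var y) us)) ∧
    List.Forall₂ R ts us ∧
    List.Forall₂ (fun a z => R a (.var z)) ts' zs ∧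
    (∀ z ∈ zs, ¬ LFree z (apps (.var y) us))

/-- The clause symmetric to (Hη_red), allowing η-expansions on the u side. -/
def HEtaR (R : LTm → LTm → Prop) (t u : LTm) : Prop :=
  ∃ (xs zs : List Var) (y : Var) (ts us us' : List LTm),
    HeadReduces t (lams xs (apps (.var y) ts)) ∧
    HeadReduces u (lams (xs ++ zs) (apps (.var y) (us ++ us'))) ∧
    List.Forall₂ R ts us ∧
    List.Forall₂ (fun z a => R (.var z) a) zs us' ∧
    (∀ z ∈ zs, ¬ LFree z (apps (.var y) ts))

/-- The Böhm preorder up to η-reductions ⊑η↓: the largest relation closed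
under (bot) and (Hη_red), defined as a greatest fixed point. -/
def EtaRedLe (t u : LTm) : Prop :=
  ∃ R : LTm → LTm → Prop,
    (∀ a b, R a b → (¬ HasHnf a) ∨ HEtaL R a b) ∧ R t u

/-- The Böhm preorder up to possibly infinite η-conversion ⊑Bη: the largest
relation closed under (bot), (Hη_red) and its symmetric clause. -/
def BohmEtaLe (t u : LTm) : Prop :=
  ∃ R : LTm → LTm → Prop,
    (∀ a b, R a b → (¬ HasHnf a) ∨ HEtaL R a b ∨ HEtaR R a b) ∧ R t u

/-- The c-painting of an ordinary λ-term. -/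
def paint (c : Color) : LTm → Tm
  | .var x => .var x
  | .lam x t => .lam c x (paint c t)
  | .app t u => .app c (paint c t) (paint c u)

/-- λ-calculus contexts. -/
inductive LCtx where
  | hole : LCtx
  | lam : Var → LCtx → LCtx
  | appL : LCtx → LTm → LCtx
  | appR : LTm → LCtx → LCtx

/-- Paint a λ-calculus context with color c (hole unchanged) and fill its hole
with a checkers term. -/
def LCtx.paintFill (c : Color) : LCtx → Tm → Tm
  | .hole, s => s
  | .lam x C, s => .lam c x (C.paintFill c s)
  | .appL C u, s => .app c (C.paintFill c s) (paint c u)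
  | .appR t C, s => .app c (paint c t) (C.paintFill c s)

/-- Checkers contexts. -/
inductive Ctx where
  | hole : Ctx
  | lam : Color → Var → Ctx → Ctx
  | appL : Color → Ctx → Tm → Ctx
  | appR : Color → Tm → Ctx → Ctx

/-- Filling the hole of a checkers context (possibly capturing free variables). -/
def Ctx.fill : Ctx → Tm → Tm
  | .hole, s => s
  | .lam c x C, s => .lam c x (C.fill s)
  | .appL c C u, s => .app c (C.fill s) u
  | .appR c t C, s => .app c t (C.fill s)

/-- Interaction improvement ⊑imp on checkers terms. -/
def Imp (t u : Tm) : Prop :=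
  ∀ (C : Ctx) (k : ℕ), Evals (C.fill t) k → ∃ k' ≤ k, Evals (C.fill u) k'

/-- Polarized whiter-cheaper improvement ⊑pwc on checkers terms. -/
def PWC (t u : Tm) : Prop :=
  ∀ (Γ : Env) (L : LinTy) (k : ℕ), HasTy Γ k t (.lin L) →
    ∃ (Γ' : Env) (L' : LinTy) (k' d : ℕ),
      HasTy Γ' k' u (.lin L') ∧ WhiterP .pos d Γ' L' Γ L ∧ k' + d ≤ k

/-- An application of an abstraction is always a root redex, silent or interacting according to
the two colors. -/
theorem hStep_beta (d c : Color) (x : Var) (b s : Tm) :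
    HStep (.app d (.lam c x b) s) (Tm.subst x s b) := by
  cases d <;> cases c
  · exact .inl (.base (.root (.mk _ _ _ _)))
  · exact .inr (.base (.root (.mk .black _ _ _)))
  · exact .inr (.base (.root (.mk .white _ _ _)))
  · exact .inl (.base (.root (.mk _ _ _ _)))

/-- The head closure of a relation passes to the left of an application, except under an
abstraction. -/
theorem headClos_app {R : Tm → Tm → Prop} {t u : Tm} (d : Color) (s : Tm)
    (ht : ∀ c x b, t ≠ .lam c x b) (h : HeadClos R t u) :
    HeadClos R (.app d t s) (.app d u s) := by
  cases h with
  | base h => exact .base (.app d s h)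
  | lam c x _ => exact absurd rfl (ht c x _)

/-- Neutral terms are typable with zero weight with every linear type. The arbitrary type is what
makes the induction on the spine of applications go through. -/
theorem neutral_typable (t : Tm) (hnf : ∀ u, ¬ HStep t u) (ht : ∀ c x b, t ≠ .lam c x b)
    (L : LinTy) : ∃ Γ : Env, HasTy Γ 0 t (.lin L) := by
  induction t generalizing L with
  | var x => exact ⟨_, 0, .ax x L⟩
  | lam c x b _ => exact absurd rfl (ht c x b)
  | app d t s ih _ =>
    have ht' : ∀ c x b, t ≠ .lam c x b := by
      rintro c x b rfl
      exact hnf _ (hStep_beta d c x b s)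
    have hnf' : ∀ u, ¬ HStep t u := fun u hu =>
      hnf (.app d u s) (hu.imp (headClos_app d s ht') (headClos_app d s ht'))
    obtain ⟨Γ, k, hΓ⟩ := ih hnf' ht' (.arr [] d L)
    have := Ty.app d hΓ (.many_nil s)
    simp only [costOf, if_true] at this
    exact ⟨_, _, this⟩

/-- Checkers head normal forms are typable with zero weight. -/
theorem hnf_typable_with_zero_weight (h : Tm) (hnf : ∀ u, ¬ HStep h u) :
    ∃ (Γ : Env) (L : LinTy), HasTy Γ 0 h (.lin L) := by
  induction h with
  | var x => exact ⟨_, .atom 0, 0, .ax x _⟩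
  | lam c x b ih =>
    obtain ⟨Γ, L, s, hs⟩ := ih fun u hu => hnf (.lam c x u) (hu.imp (.lam c x) (.lam c x))
    exact ⟨_, _, s, .lam c x hs⟩
  | app d t s _ _ =>
    obtain ⟨Γ, hΓ⟩ := neutral_typable _ hnf (by simp) (.atom 0)
    exact ⟨Γ, _, hΓ⟩
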